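/- arXiv:2106.03803 — 2 statements merged into one kernel-verified Lean document; each statement's English description precedes it below -/
import Mathlib

section
/- Let 0 → M_0 → M →(p) M_1 → 0 be an admissible exact sequence in A. (1) If the ring homomorphism End(M) → End(M_1) is split surjective, End(M_1) is a semi-simple ℚ-algebra, and Hom(M, M_0') = 0 for every object M_0' of A_0, then the sequence is right saturated. (2) Dually, if End(M) → End(M_0) is split surjective, End(M_0) is a semi-simple ℚ-algebra, and Hom(M_1', M) = 0 for every object M_1' of A_1, then the sequence is left saturated. -/
set_option maxHeartbeats 1000000
set_option synthInstance.maxHeartbeats 400000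

open CategoryTheory CategoryTheory.Limits ZeroObject

universe v u

attribute [local instance] CategoryTheory.Abelian.hasFiniteBiproducts

variable {A : Type u} [Category.{v} A] [Abelian A] [CategoryTheory.Linear ℚ A]

/-- An Abelian subcategory of `A`: a class of objects containing `0` and closed under
subobjects, quotients and finite direct sums (so that the corresponding full subcategory
is Abelian and the inclusion is exact). -/
structure AbelianSubcat (A : Type u) [Category.{v} A] [Abelian A]
    [CategoryTheory.Linear ℚ A] where
  P : A → Prop
  zero_mem : P 0
  mem_of_mono : ∀ {X Y : A} (f : X ⟶ Y), Mono f → P Y → P X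
  mem_of_epi : ∀ {X Y : A} (f : X ⟶ Y), Epi f → P X → P Y
  mem_biprod : ∀ {X Y : A}, P X → P Y → P (X ⊞ Y)

/-- The two subcategories are orthogonal: `Hom(A_0, A_1) = Hom(A_1, A_0) = 0`. -/
def OrthogonalPair (A0 A1 : AbelianSubcat A) : Prop :=
  (∀ {X Y : A}, A0.P X → A1.P Y → ∀ f : X ⟶ Y, f = 0) ∧
  (∀ {X Y : A}, A1.P X → A0.P Y → ∀ f : X ⟶ Y, f = 0)

/-- An admissible exact sequence `0 → M_0 → M → M_1 → 0` with `M_0 ∈ A_0`, `M_1 ∈ A_1`. -/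
structure AdmissibleSeq (A0 A1 : AbelianSubcat A) (M0 M M1 : A)
    (i : M0 ⟶ M) (p : M ⟶ M1) : Prop where
  zero : i ≫ p = 0
  shortExact : (ShortComplex.mk i p zero).ShortExact
  mem0 : A0.P M0
  mem1 : A1.P M1

/-- The image `p(N)` of a subobject `N ⊆ X` under a morphism `p : X ⟶ Y`. -/
noncomputable def subImg {X Y : A} (p : X ⟶ Y) (N : Subobject X) : Subobject Y :=
  imageSubobject (N.arrow ≫ p)

/-- `N` is the universal lift of the subobject `N₁ ⊆ M_1` along `p : M ↠ M_1`:
`p(N) = N₁`, and every subobject of `M` whose image under `p` is `N₁` contains `N`. -/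
def IsUnivLift {X Y : A} (p : X ⟶ Y) (N1 : Subobject Y) (N : Subobject X) : Prop :=
  subImg p N = N1 ∧ ∀ N' : Subobject X, subImg p N' = N1 → N ≤ N'

/-- `N` is the universal extension of the subobject `N₀ ⊆ M₀sub` (`M₀sub ⊆ M` a given
subobject): `N ∩ M₀sub = N₀`, and every subobject of `M` whose intersection with
`M₀sub` is `N₀` is contained in `N`. -/
def IsUnivExt {X : A} (M0sub : Subobject X) (N0 : Subobject X) (N : Subobject X) : Prop :=
  N ⊓ M0sub = N0 ∧ ∀ N' : Subobject X, N' ⊓ M0sub = N0 → N' ≤ N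

/-- The `m`-th power `M^m` of an object (`M^0 = 0`). -/
noncomputable abbrev pow (M : A) (m : ℕ) : A := ⨁ (fun _ : Fin m => M)

/-- The `n`-th power `f^n : X^n ⟶ Y^n` of a morphism. -/
noncomputable abbrev powMap {X Y : A} (f : X ⟶ Y) (n : ℕ) : pow X n ⟶ pow Y n :=
  biproduct.map (fun _ => f)

/-- The admissible exact sequence `0 → M_0 →i M →p M_1 → 0` is *right saturated* if every
`φ₁ : M_1^n ⟶ M_1^m` has a lift `φ : M^n ⟶ M^m` such that `ker(φ)` is the universal lift
of `ker(φ₁)` along `p^n`. -/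
def RightSaturated {M0 M M1 : A} (i : M0 ⟶ M) (p : M ⟶ M1) : Prop :=
  ∀ (n m : ℕ) (φ1 : pow M1 n ⟶ pow M1 m),
    ∃ φ : pow M n ⟶ pow M m,
      φ ≫ powMap p m = powMap p n ≫ φ1 ∧
      IsUnivLift (powMap p n) (kernelSubobject φ1) (kernelSubobject φ)

/-- The admissible exact sequence `0 → M_0 →i M →p M_1 → 0` is *left saturated* if every
`φ₀ : M_0^n ⟶ M_0^m` has an extension `φ : M^n ⟶ M^m` such that `im(φ)` is the universal
extension of `im(φ₀)` inside `M^m` (relative to the subobject `M_0^m ⊆ M^m`). -/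
def LeftSaturated {M0 M M1 : A} (i : M0 ⟶ M) (p : M ⟶ M1) : Prop :=
  ∀ (n m : ℕ) (φ0 : pow M0 n ⟶ pow M0 m),
    ∃ φ : pow M n ⟶ pow M m,
      powMap i n ≫ φ = φ0 ≫ powMap i m ∧
      IsUnivExt (imageSubobject (powMap i m)) (imageSubobject (φ0 ≫ powMap i m))
        (imageSubobject φ)

lemma CategoryTheory.Subobject.factors_iff_comp_cokernel_eq_zero
    {C : Type u} [Category.{v} C] [Abelian C]
    {X Z : C} (N : Subobject X) (f : Z ⟶ X) :
    N.Factors f ↔ f ≫ cokernel.π N.arrow = 0 := by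
  constructor
  · intro h
    rw [← N.factorThru_arrow f h, Category.assoc, cokernel.condition, comp_zero]
  · intro h
    rw [← Abelian.monoLift_comp N.arrow f h]
    exact Subobject.factors_comp_arrow _

lemma CategoryTheory.Subobject.imageSubobject_le_iff
    {C : Type u} [Category.{v} C] [Abelian C]
    {X Z : C} (N : Subobject X) (f : Z ⟶ X) :
    imageSubobject f ≤ N ↔ N.Factors f := by
  constructor
  · intro h
    apply Subobject.factors_of_le f h
    simpa using imageSubobject_factors_comp_self f (𝟙 Z)
  · intro h
    exact imageSubobject_le f (N.factorThru f h) (by simp)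

/-- If `Y` is the cokernel of `k : K ⟶ X` and `Z` has no nonzero morphisms to quotients of `K`,
then a morphism `Z ⟶ X` whose image in `Y` lies in `p(N)` already lies in `N`. -/
lemma CategoryTheory.Subobject.factors_of_factors_subImg
    {C : Type u} [Category.{v} C] [Abelian C]
    {K X Y Z : C} (k : K ⟶ X) (p : X ⟶ Y)
    (hdesc : ∀ (Q : C) (h : X ⟶ Q), k ≫ h = 0 → ∃ d : Y ⟶ Q, h = p ≫ d)
    (hZ : ∀ (Q : C) (g : K ⟶ Q), Epi g → ∀ f : Z ⟶ Q, f = 0)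
    (N : Subobject X) (e : Z ⟶ X) (he : (subImg p N).Factors (e ≫ p)) : N.Factors e := by
  rw [Subobject.factors_iff_comp_cokernel_eq_zero]
  set q := cokernel.π N.arrow
  obtain ⟨d, hd⟩ := hdesc _ (q ≫ cokernel.π (k ≫ q)) (by simp [← Category.assoc])
  have hN : (subImg p N).arrow ≫ d = 0 := by
    have h : subImg p N ≤ kernelSubobject d := by
      refine (Subobject.imageSubobject_le_iff _ _).2 ((kernelSubobject_factors_iff _ _).2 ?_)
      rw [Category.assoc, ← hd, ← Category.assoc, cokernel.condition, zero_comp]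
    rw [← Subobject.ofLE_arrow h, Category.assoc, kernelSubobject_arrow_comp, comp_zero]
  have hz : (e ≫ q) ≫ cokernel.π (k ≫ q) = 0 := by
    rw [Category.assoc, hd, ← Category.assoc, ← Subobject.factorThru_arrow _ _ he,
      Category.assoc, hN, comp_zero]
  rw [← kernel.lift_ι (cokernel.π (k ≫ q)) (e ≫ q) hz,
    hZ _ (Abelian.factorThruImage (k ≫ q)) inferInstance (kernel.lift _ (e ≫ q) hz), zero_comp]

/-- If `K` is the kernel of `p : X ⟶ Y` and `Z` receives no nonzero morphisms from subobjects
of `Y`, then a morphism `X ⟶ Z` vanishing on `N ∩ K` vanishes on `N`. -/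
lemma CategoryTheory.Subobject.arrow_comp_eq_zero_of_inf
    {C : Type u} [Category.{v} C] [Abelian C]
    {K X Y Z : C} (k : K ⟶ X) [Mono k] (p : X ⟶ Y)
    (hlift : ∀ (Q : C) (h : Q ⟶ X), h ≫ p = 0 → ∃ d : Q ⟶ K, h = d ≫ k)
    (hZ : ∀ (Q : C) (g : Q ⟶ Y), Mono g → ∀ f : Q ⟶ Z, f = 0)
    (N : Subobject X) (e : X ⟶ Z)
    (he : (N ⊓ imageSubobject k).arrow ≫ e = 0) : N.arrow ≫ e = 0 := by
  have hz : kernel.ι (N.arrow ≫ p) ≫ N.arrow ≫ e = 0 := by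
    obtain ⟨d, hd⟩ := hlift _ (kernel.ι (N.arrow ≫ p) ≫ N.arrow) (by simp)
    have hf : (N ⊓ imageSubobject k).Factors (kernel.ι (N.arrow ≫ p) ≫ N.arrow) := by
      rw [Subobject.inf_factors]
      refine ⟨Subobject.factors_comp_arrow _, ?_⟩
      rw [hd]
      exact imageSubobject_factors_comp_self k d
    rw [← Category.assoc, ← Subobject.factorThru_arrow _ _ hf, Category.assoc, he, comp_zero]
  have := cokernel.π_desc (kernel.ι (N.arrow ≫ p)) (N.arrow ≫ e) hz
  rw [← this, hZ _ (Abelian.factorThruCoimage (N.arrow ≫ p)) inferInstance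
    (cokernel.desc _ _ hz), comp_zero]

lemma AbelianSubcat.pow_mem (B : AbelianSubcat A) {X : A} (hX : B.P X) (n : ℕ) :
    B.P (pow X n) := by
  induction n with
  | zero =>
    refine B.mem_of_mono (0 : pow X 0 ⟶ 0) ⟨fun a b _ => ?_⟩ B.zero_mem
    ext j
    exact j.elim0
  | succ n ih =>
    refine B.mem_of_mono (biprod.lift
      (biproduct.lift fun j : Fin n => biproduct.π (fun _ : Fin (n + 1) => X) j.castSucc)
      (biproduct.π (fun _ : Fin (n + 1) => X) (Fin.last n))) ⟨fun a b h => ?_⟩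
      (B.mem_biprod ih hX)
    ext j
    refine Fin.lastCases ?_ (fun j => ?_) j
    · simpa using h =≫ biprod.snd
    · simpa using h =≫ biprod.fst ≫ biproduct.π (fun _ : Fin n => X) j

lemma powMap_exists_desc {C : Type u} [Category.{v} C] [Abelian C]
    {M0 M M1 : C} (i : M0 ⟶ M) (p : M ⟶ M1) (hz : i ≫ p = 0)
    (hS : (ShortComplex.mk i p hz).ShortExact) (n : ℕ) (Q : C) (h : pow M n ⟶ Q)
    (hh : powMap i n ≫ h = 0) : ∃ d : pow M1 n ⟶ Q, h = powMap p n ≫ d := by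
  have hj (j : Fin n) : i ≫ biproduct.ι (fun _ : Fin n => M) j ≫ h = 0 := by
    simpa using biproduct.ι (fun _ : Fin n => M0) j ≫= hh
  refine ⟨biproduct.desc fun j => hS.gIsCokernel.desc (CokernelCofork.ofπ _ (hj j)), ?_⟩
  ext j
  simp only [biproduct.ι_map_assoc, biproduct.ι_desc]
  exact (hS.gIsCokernel.fac (CokernelCofork.ofπ _ (hj j)) WalkingParallelPair.one).symm

lemma powMap_exists_lift {C : Type u} [Category.{v} C] [Abelian C]
    {M0 M M1 : C} (i : M0 ⟶ M) (p : M ⟶ M1) (hz : i ≫ p = 0)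
    (hS : (ShortComplex.mk i p hz).ShortExact) (n : ℕ) (Q : C) (h : Q ⟶ pow M n)
    (hh : h ≫ powMap p n = 0) : ∃ d : Q ⟶ pow M0 n, h = d ≫ powMap i n := by
  have hj (j : Fin n) : (h ≫ biproduct.π (fun _ : Fin n => M) j) ≫ p = 0 := by
    simpa using hh =≫ biproduct.π (fun _ : Fin n => M1) j
  refine ⟨biproduct.lift fun j => hS.fIsKernel.lift (KernelFork.ofι _ (hj j)), ?_⟩
  ext j
  simp only [Category.assoc, biproduct.map_π, biproduct.lift_π_assoc]
  exact (hS.fIsKernel.fac (KernelFork.ofι _ (hj j)) WalkingParallelPair.zero).symm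

lemma LinearMap.exists_comp_comp_eq_self {R V W : Type*} [Ring R] [IsSemisimpleRing R]
    [AddCommGroup V] [Module R V] [AddCommGroup W] [Module R W] (f : V →ₗ[R] W) :
    ∃ g : W →ₗ[R] V, f ∘ₗ g ∘ₗ f = f := by
  obtain ⟨h, hh⟩ := IsSemisimpleModule.lifting_property f.rangeRestrict
    f.surjective_rangeRestrict LinearMap.id
  obtain ⟨k, hk⟩ := IsSemisimpleModule.extension_property (LinearMap.range f).subtype
    Subtype.val_injective LinearMap.id
  refine ⟨h ∘ₗ k, LinearMap.ext fun x => ?_⟩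
  have h1 : k (f x) = f.rangeRestrict x := LinearMap.congr_fun hk (f.rangeRestrict x)
  have h2 : f.rangeRestrict (h (f.rangeRestrict x)) = f.rangeRestrict x :=
    LinearMap.congr_fun hh _
  simpa [h1] using congrArg Subtype.val h2

lemma comp_pow_eq_sum {C : Type u} [Category.{v} C] [Abelian C]
    {X Z W : C} {m : ℕ} (f : Z ⟶ pow X m) (g : pow X m ⟶ W) :
    f ≫ g = ∑ k : Fin m, (f ≫ biproduct.π (fun _ : Fin m => X) k) ≫
      (biproduct.ι (fun _ : Fin m => X) k ≫ g) := by
  conv_lhs => rw [← Category.id_comp g, ← biproduct.total]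
  simp only [Preadditive.comp_sum, Preadditive.sum_comp, Category.assoc]

/-- Matrices over a semisimple endomorphism ring are von Neumann regular. -/
lemma exists_pow_comp_comp_eq_self {C : Type u} [Category.{v} C] [Abelian C]
    {X : C} [IsSemisimpleRing (End X)] {n m : ℕ}
    (f : pow X n ⟶ pow X m) : ∃ g : pow X m ⟶ pow X n, f ≫ g ≫ f = f := by
  let F : (pow X m ⟶ X) →ₗ[End X] (pow X n ⟶ X) :=
    { toFun := fun h => f ≫ h
      map_add' := fun a b => by simp
      map_smul' := fun c a => by simp [End.smul_right] }
  obtain ⟨G, hG⟩ := F.exists_comp_comp_eq_self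
  let g : pow X m ⟶ pow X n :=
    biproduct.lift fun j => G (biproduct.π (fun _ : Fin n => X) j)
  have hg (h : pow X n ⟶ X) : G h = g ≫ h := by
    let c (j : Fin n) : End X := biproduct.ι (fun _ : Fin n => X) j ≫ h
    have e : h = ∑ j : Fin n, c j • biproduct.π (fun _ : Fin n => X) j := by
      simpa [c, End.smul_right] using comp_pow_eq_sum (𝟙 (pow X n)) h
    conv_lhs => rw [e]
    conv_rhs => rw [e, Preadditive.comp_sum]
    rw [map_sum]
    refine Finset.sum_congr rfl fun j _ => ?_
    rw [map_smul, End.smul_right, End.smul_right]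
    exact (biproduct.lift_π_assoc (fun j => G (biproduct.π (fun _ : Fin n => X) j)) j
      (show X ⟶ X from c j)).symm
  refine ⟨g, ?_⟩
  ext k : 1
  have := LinearMap.congr_fun hG (biproduct.π (fun _ : Fin m => X) k)
  simpa [F, hg] using this

/-- Apply a ring homomorphism `End X →+* End Y` to the entries of a matrix. -/
noncomputable def endMapMatrix {C : Type u} [Category.{v} C] [Abelian C]
    {X Y : C} (s : End X →+* End Y) {n m : ℕ}
    (f : pow X n ⟶ pow X m) : pow Y n ⟶ pow Y m :=
  biproduct.matrix fun j k =>
    (s (biproduct.ι (fun _ : Fin n => X) j ≫ f ≫ biproduct.π (fun _ : Fin m => X) k) : End Y)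

lemma ι_endMapMatrix_π {C : Type u} [Category.{v} C] [Abelian C]
    {X Y : C} (s : End X →+* End Y) {n m : ℕ} (f : pow X n ⟶ pow X m)
    (j : Fin n) (k : Fin m) :
    biproduct.ι (fun _ : Fin n => Y) j ≫ endMapMatrix s f ≫ biproduct.π (fun _ : Fin m => Y) k =
      (s (biproduct.ι (fun _ : Fin n => X) j ≫ f ≫
        biproduct.π (fun _ : Fin m => X) k) : End Y) := by
  simp [endMapMatrix]

lemma endMapMatrix_comp {C : Type u} [Category.{v} C] [Abelian C]
    {X Y : C} (s : End X →+* End Y) {n m l : ℕ}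
    (f : pow X n ⟶ pow X m) (g : pow X m ⟶ pow X l) :
    endMapMatrix s (f ≫ g) = endMapMatrix s f ≫ endMapMatrix s g := by
  apply biproduct.hom_ext
  intro k
  apply biproduct.hom_ext'
  intro j
  rw [ι_endMapMatrix_π]
  have hs (a b : End X) : (s (show X ⟶ X from a ≫ b : End X) : Y ⟶ Y) = s a ≫ s b := s.map_mul b a
  have e1 := comp_pow_eq_sum (biproduct.ι (fun _ : Fin n => X) j ≫ f)
    (g ≫ biproduct.π (fun _ : Fin l => X) k)
  have e2 := comp_pow_eq_sum (biproduct.ι (fun _ : Fin n => Y) j ≫ endMapMatrix s f)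
    (endMapMatrix s g ≫ biproduct.π (fun _ : Fin l => Y) k)
  simp only [Category.assoc] at e1 e2 ⊢
  rw [e1, e2]
  refine (map_sum s _ _).trans (Finset.sum_congr rfl fun a _ => ?_)
  have := hs (biproduct.ι (fun _ : Fin n => X) j ≫ f ≫ biproduct.π (fun _ : Fin m => X) a)
    (biproduct.ι (fun _ : Fin m => X) a ≫ g ≫ biproduct.π (fun _ : Fin l => X) k)
  rw [← ι_endMapMatrix_π, ← ι_endMapMatrix_π] at this
  simpa only [Category.assoc] using this

lemma endMapMatrix_comp_powMap {C : Type u} [Category.{v} C] [Abelian C]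
    {X Y : C} (s : End X →+* End Y) (p : Y ⟶ X)
    (hs : ∀ a : End X, (s a : Y ⟶ Y) ≫ p = p ≫ (a : X ⟶ X)) {n m : ℕ}
    (f : pow X n ⟶ pow X m) :
    endMapMatrix s f ≫ powMap p m = powMap p n ≫ f := by
  apply biproduct.hom_ext
  intro k
  apply biproduct.hom_ext'
  intro j
  have h := ι_endMapMatrix_π s f j k
  simp only [Category.assoc, biproduct.map_π, biproduct.ι_map_assoc]
  rw [← hs, ← h]
  simp only [Category.assoc]

lemma powMap_comp_endMapMatrix {C : Type u} [Category.{v} C] [Abelian C]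
    {X Y : C} (s : End X →+* End Y) (i : X ⟶ Y)
    (hs : ∀ a : End X, i ≫ (s a : Y ⟶ Y) = (a : X ⟶ X) ≫ i) {n m : ℕ}
    (f : pow X n ⟶ pow X m) :
    powMap i n ≫ endMapMatrix s f = f ≫ powMap i m := by
  apply biproduct.hom_ext
  intro k
  apply biproduct.hom_ext'
  intro j
  have h := ι_endMapMatrix_π s f j k
  have h' := hs (biproduct.ι (fun _ : Fin n => X) j ≫ f ≫ biproduct.π (fun _ : Fin m => X) k)
  simp only [Category.assoc, biproduct.map_π, biproduct.ι_map_assoc]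
  rw [h, h']
  simp only [Category.assoc]

lemma rightSaturated_of_semisimple (A0 : AbelianSubcat A) {M0 M M1 : A} (i : M0 ⟶ M)
    (p : M ⟶ M1) (hz : i ≫ p = 0) (hS : (ShortComplex.mk i p hz).ShortExact) (h0 : A0.P M0)
    (s : End M1 →+* End M) (hs : ∀ a : End M1, (s a : M ⟶ M) ≫ p = p ≫ (a : M1 ⟶ M1))
    [IsSemisimpleRing (End M1)] (hM : ∀ X : A, A0.P X → ∀ f : M ⟶ X, f = 0) :
    RightSaturated i p := by
  intro n m φ1
  obtain ⟨ψ1, h1⟩ := exists_pow_comp_comp_eq_self φ1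
  have hp : Epi p := hS.epi_g
  set φ := endMapMatrix s φ1
  set ψ := endMapMatrix s ψ1
  have hφ : φ ≫ ψ ≫ φ = φ := by rw [← endMapMatrix_comp, ← endMapMatrix_comp, h1]
  have cφ : φ ≫ powMap p m = powMap p n ≫ φ1 := endMapMatrix_comp_powMap s p hs φ1
  have cψ : ψ ≫ powMap p n = powMap p m ≫ ψ1 := endMapMatrix_comp_powMap s p hs ψ1
  have hφ' : (𝟙 _ - φ ≫ ψ) ≫ φ = 0 := by simp [Preadditive.sub_comp, hφ]
  have h1' : (𝟙 _ - φ1 ≫ ψ1) ≫ φ1 = 0 := by simp [Preadditive.sub_comp, h1]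
  have ce : (𝟙 _ - φ ≫ ψ) ≫ powMap p n = powMap p n ≫ (𝟙 _ - φ1 ≫ ψ1) := by
    simp only [Preadditive.sub_comp, Preadditive.comp_sub, Category.assoc, cψ,
      Category.id_comp, Category.comp_id]
    rw [reassoc_of% cφ]
  have hker {Z : A} (a : Z ⟶ pow M n) (ha : a ≫ φ = 0) : a = a ≫ (𝟙 _ - φ ≫ ψ) := by
    simp [Preadditive.comp_sub, reassoc_of% ha]
  have hker1 {Z : A} (a : Z ⟶ pow M1 n) (ha : a ≫ φ1 = 0) : a = a ≫ (𝟙 _ - φ1 ≫ ψ1) := by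
    simp [Preadditive.comp_sub, reassoc_of% ha]
  refine ⟨φ, cφ, le_antisymm ?_ ?_, fun N hN => ?_⟩
  · refine (Subobject.imageSubobject_le_iff _ _).2 ((kernelSubobject_factors_iff _ _).2 ?_)
    rw [Category.assoc, ← cφ, kernelSubobject_arrow_comp_assoc, zero_comp]
  · apply Subobject.le_of_factors
    rw [hker1 _ (kernelSubobject_arrow_comp φ1)]
    apply Subobject.factors_of_factors_right
    rw [Subobject.factors_iff_comp_cokernel_eq_zero, ← cancel_epi (powMap p n),
      ← Category.assoc, ← ce, comp_zero, ← Subobject.factors_iff_comp_cokernel_eq_zero]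
    have hf : (kernelSubobject φ).Factors (𝟙 _ - φ ≫ ψ) := (kernelSubobject_factors_iff _ _).2 hφ'
    rw [← Subobject.factorThru_arrow _ _ hf, Category.assoc]
    exact imageSubobject_factors_comp_self _ _
  · apply Subobject.le_of_factors
    rw [hker _ (kernelSubobject_arrow_comp φ)]
    apply Subobject.factors_of_factors_right
    refine Subobject.factors_of_factors_subImg (powMap i n) (powMap p n)
      (powMap_exists_desc i p hz hS n) (fun Q g _ f => ?_) N _ ?_
    · apply biproduct.hom_ext'
      intro j
      rw [comp_zero]
      exact hM Q (A0.mem_of_epi g inferInstance (A0.pow_mem h0 n)) _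
    · rw [hN, kernelSubobject_factors_iff, ce, Category.assoc, h1', comp_zero]

lemma leftSaturated_of_semisimple (A1 : AbelianSubcat A) {M0 M M1 : A} (i : M0 ⟶ M)
    (p : M ⟶ M1) (hz : i ≫ p = 0) (hS : (ShortComplex.mk i p hz).ShortExact) (h1 : A1.P M1)
    (s : End M0 →+* End M) (hs : ∀ a : End M0, i ≫ (s a : M ⟶ M) = (a : M0 ⟶ M0) ≫ i)
    [IsSemisimpleRing (End M0)] (hM : ∀ X : A, A1.P X → ∀ f : X ⟶ M, f = 0) :
    LeftSaturated i p := by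
  intro n m φ0
  obtain ⟨ψ0, h0⟩ := exists_pow_comp_comp_eq_self φ0
  have hi : Mono i := hS.mono_f
  set φ := endMapMatrix s φ0
  set ψ := endMapMatrix s ψ0
  have hφ : φ ≫ ψ ≫ φ = φ := by rw [← endMapMatrix_comp, ← endMapMatrix_comp, h0]
  have cφ : powMap i n ≫ φ = φ0 ≫ powMap i m := powMap_comp_endMapMatrix s i hs φ0
  have cψ : powMap i m ≫ ψ = ψ0 ≫ powMap i n := powMap_comp_endMapMatrix s i hs ψ0
  have hfix : ∀ {Z : A} (a : Z ⟶ pow M m), (imageSubobject φ).Factors a → a ≫ ψ ≫ φ = a := by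
    intro Z a ha
    have : (imageSubobject φ).arrow ≫ ψ ≫ φ = (imageSubobject φ).arrow := by
      rw [← cancel_epi (factorThruImageSubobject φ)]
      simp [hφ]
    rw [← Subobject.factorThru_arrow _ _ ha, Category.assoc, this]
  refine ⟨φ, cφ, le_antisymm ?_ ?_, fun N hN => ?_⟩
  · apply Subobject.le_of_factors
    obtain ⟨d, hd⟩ : ∃ d : _ ⟶ pow M0 m,
        (imageSubobject φ ⊓ imageSubobject (powMap i m)).arrow = d ≫ powMap i m := by
      refine powMap_exists_lift i p hz hS m _ _ ?_
      have hk : imageSubobject (powMap i m) ≤ kernelSubobject (powMap p m) := by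
        refine (Subobject.imageSubobject_le_iff _ _).2 ((kernelSubobject_factors_iff _ _).2 ?_)
        ext
        simp [hz]
      exact (kernelSubobject_factors_iff _ _).1
        (Subobject.factors_of_le _ hk (Subobject.inf_arrow_factors_right _ _))
    rw [← hfix _ (Subobject.inf_arrow_factors_left _ _), hd, Category.assoc, reassoc_of% cψ, cφ,
      ← Category.assoc]
    exact imageSubobject_factors_comp_self _ _
  · refine (Subobject.imageSubobject_le_iff _ _).2 ((Subobject.inf_factors _).2 ⟨?_, ?_⟩)
    · rw [← cφ]
      exact imageSubobject_factors_comp_self _ _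
    · exact imageSubobject_factors_comp_self _ _
  · apply Subobject.le_of_factors
    have hcancel : N.arrow ≫ (𝟙 _ - ψ ≫ φ) = 0 := by
      refine Subobject.arrow_comp_eq_zero_of_inf (powMap i m) (powMap p m)
        (powMap_exists_lift i p hz hS m) (fun Q g _ f => ?_) N _ ?_
      · apply biproduct.hom_ext
        intro j
        rw [zero_comp]
        exact hM Q (A1.mem_of_mono g inferInstance (A1.pow_mem h1 m)) _
      · have hle : N ⊓ imageSubobject (powMap i m) ≤ imageSubobject φ := by
          rw [hN, Subobject.imageSubobject_le_iff, ← cφ]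
          exact imageSubobject_factors_comp_self _ _
        have := hfix _ (Subobject.factors_of_le _ hle (Subobject.factors_self _))
        rw [Preadditive.comp_sub, this, Category.comp_id, sub_self]
    rw [Preadditive.comp_sub, Category.comp_id, sub_eq_zero] at hcancel
    rw [hcancel, ← Category.assoc]
    exact imageSubobject_factors_comp_self _ _

/-- **Lemma (`LEMMASATSS`).** Let `0 → M_0 →i M →p M_1 → 0` be an admissible exact
sequence.
1. If the induced ring homomorphism `End(M) → End(M_1)` is split surjective (i.e. admits
a ring homomorphism section), `End(M_1)` is a semi-simple `ℚ`-algebra, and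
`Hom(M, A_0) = 0`, then the sequence is right saturated.
2. Dually, if the induced ring homomorphism `End(M) → End(M_0)` is split surjective,
`End(M_0)` is a semi-simple `ℚ`-algebra and `Hom(A_1, M) = 0`, then the sequence is left
saturated. -/
theorem saturated_of_semisimple (A0 A1 : AbelianSubcat A) (horth : OrthogonalPair A0 A1)
    (M0 M M1 : A) (i : M0 ⟶ M) (p : M ⟶ M1) (hadm : AdmissibleSeq A0 A1 M0 M M1 i p) :
    ((∀ (r : CategoryTheory.End M →+* CategoryTheory.End M1)
        (_ : ∀ e : CategoryTheory.End M, (e : M ⟶ M) ≫ p = p ≫ (r e : M1 ⟶ M1))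
        (s : CategoryTheory.End M1 →+* CategoryTheory.End M),
        r.comp s = RingHom.id _ → IsSemisimpleRing (CategoryTheory.End M1) →
        (∀ X : A, A0.P X → ∀ f : M ⟶ X, f = 0) →
        RightSaturated i p) ∧
     (∀ (r : CategoryTheory.End M →+* CategoryTheory.End M0)
        (_ : ∀ e : CategoryTheory.End M, i ≫ (e : M ⟶ M) = (r e : M0 ⟶ M0) ≫ i)
        (s : CategoryTheory.End M0 →+* CategoryTheory.End M),
        r.comp s = RingHom.id _ → IsSemisimpleRing (CategoryTheory.End M0) →
        (∀ X : A, A1.P X → ∀ f : X ⟶ M, f = 0) →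
        LeftSaturated i p)) := by
  refine ⟨fun r hr s hrs _ hM => ?_, fun r hr s hrs _ hM => ?_⟩
  · refine rightSaturated_of_semisimple A0 i p hadm.zero hadm.shortExact hadm.mem0 s
      (fun a => ?_) hM
    rw [hr, show r (s a) = a from RingHom.congr_fun hrs a]
  · refine leftSaturated_of_semisimple A1 i p hadm.zero hadm.shortExact hadm.mem1 s
      (fun a => ?_) hM
    rw [hr, show r (s a) = a from RingHom.congr_fun hrs a]
end

section
/- Let 0 → M_0 → M → M_1 → 0 be an admissible exact sequence in A with M_0 ∈ A_0 and M_1 ∈ A_1 both principal objects. (1) If the sequence is right saturated and Hom(M, M_0') = 0 for every object M_0' of A_0, then M ⊕ M_0 is principal. (2) If the sequence is left saturated and Hom(M_1', M) = 0 for every object M_1' of A_1, then M ⊕ M_1 is principal. -/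
set_option maxHeartbeats 1000000
set_option synthInstance.maxHeartbeats 400000

open CategoryTheory CategoryTheory.Limits ZeroObject

universe v u

attribute [local instance] CategoryTheory.Abelian.hasFiniteBiproducts

variable {A : Type u} [Category.{v} A] [Abelian A] [CategoryTheory.Linear ℚ A]

/-- An object `M` of an Abelian category is *principal* if for every `m ≥ 0` and every
subobject `N' ⊆ M^m` there are `k, l ≥ 0` and morphisms `α : M^k ⟶ M^m`, `β : M^k ⟶ M^l`
such that `N'` is the image of the restriction of `α` to `ker(β)`. -/
def IsPrincipal (M : A) : Prop :=
  ∀ (m : ℕ) (N' : Subobject (pow M m)),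
    ∃ (k l : ℕ) (α : pow M k ⟶ pow M m) (β : pow M k ⟶ pow M l),
      imageSubobject (kernel.ι β ≫ α) = N'

section Factoring

variable {C : Type u} [Category.{v} C] [Abelian C]

lemma factors_iff_comp_cokernel {X T : C} (N : Subobject X) (x : T ⟶ X) :
    N.Factors x ↔ x ≫ cokernel.π N.arrow = 0 := by
  constructor
  · intro h
    rw [← Subobject.factorThru_arrow N x h, Category.assoc, cokernel.condition, comp_zero]
  · intro h
    have e : Abelian.monoLift N.arrow x h ≫ N.arrow = x := Abelian.monoLift_comp _ _ _
    rw [← e]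
    exact Subobject.factors_comp_arrow _

lemma factors_of_epi_comp {X T T' : C} {N : Subobject X} (e : T' ⟶ T) [Epi e] {x : T ⟶ X}
    (h : N.Factors (e ≫ x)) : N.Factors x := by
  rw [factors_iff_comp_cokernel, Category.assoc] at h
  rw [factors_iff_comp_cokernel]
  exact (cancel_epi e).1 (by rw [h, comp_zero])

lemma factors_neg {X T : C} {N : Subobject X} {x : T ⟶ X} (h : N.Factors x) :
    N.Factors (-x) := by
  rw [factors_iff_comp_cokernel] at h ⊢
  rw [Preadditive.neg_comp, h, neg_zero]

lemma factors_sub {X T : C} {N : Subobject X} {x y : T ⟶ X} (hx : N.Factors x)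
    (hy : N.Factors y) : N.Factors (x - y) := by
  rw [sub_eq_add_neg]
  exact Subobject.factors_add _ _ hx (factors_neg hy)

lemma imageSubobject_factors_iff {X Y T : C} (f : X ⟶ Y) (x : T ⟶ Y) :
    (imageSubobject f).Factors x ↔
      ∃ (T' : C) (e : T' ⟶ T) (_ : Epi e) (y : T' ⟶ X), e ≫ x = y ≫ f := by
  constructor
  · intro h
    obtain ⟨T', e, he, y, hy⟩ := surjective_up_to_refinements_of_epi
      (factorThruImageSubobject f) ((imageSubobject f).factorThru x h)
    refine ⟨T', e, he, y, ?_⟩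
    rw [← Subobject.factorThru_arrow _ x h, ← Category.assoc, hy, Category.assoc,
      imageSubobject_arrow_comp]
  · rintro ⟨T', e, he, y, hy⟩
    apply factors_of_epi_comp e
    rw [hy]
    exact imageSubobject_factors_comp_self _ _

omit [Abelian C] in
lemma subobject_eq_of_factors_iff {X : C} {N N' : Subobject X}
    (h : ∀ ⦃T : C⦄ (x : T ⟶ X), N.Factors x ↔ N'.Factors x) : N = N' :=
  le_antisymm (Subobject.le_of_factors ((h _).1 (Subobject.factors_self _)))
    (Subobject.le_of_factors ((h _).2 (Subobject.factors_self _)))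

lemma subImg_factors_iff {X Y T : C} (f : X ⟶ Y) (N : Subobject X)
    (x : T ⟶ Y) : (subImg f N).Factors x ↔
      ∃ (T' : C) (e : T' ⟶ T) (_ : Epi e) (y : T' ⟶ X), N.Factors y ∧ e ≫ x = y ≫ f := by
  rw [subImg, imageSubobject_factors_iff]
  constructor
  · rintro ⟨T', e, he, y, hy⟩
    exact ⟨T', e, he, y ≫ N.arrow, Subobject.factors_comp_arrow _, by simpa using hy⟩
  · rintro ⟨T', e, he, y, hN, hy⟩
    exact ⟨T', e, he, N.factorThru y hN, by simpa using hy⟩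

lemma eq_zero_of_factors {X Y I : C} {f : X ⟶ Y} (c : I ⟶ Y)
    (h : (imageSubobject c).Factors f)
    (h0 : ∀ g : X ⟶ (imageSubobject c : C), g = 0) : f = 0 := by
  rw [← Subobject.factorThru_arrow _ f h, h0 (Subobject.factorThru _ f h), zero_comp]

/-- A morphism killed by the kernel of `d` vanishes as soon as every morphism from the
coimage of `d` to its target does. -/
lemma eq_zero_of_kernel_comp {X Y Z : C} (d : X ⟶ Y) (g : X ⟶ Z) (hk : kernel.ι d ≫ g = 0)
    (h0 : ∀ g' : Abelian.coimage d ⟶ Z, g' = 0) : g = 0 := by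
  have : Abelian.coimage.π d ≫ cokernel.desc (kernel.ι d) g hk = g := cokernel.π_desc _ _ _
  rw [← this, h0 (cokernel.desc (kernel.ι d) g hk), comp_zero]

/-- `N` is the image of the restriction of `α` to the kernel of `β`, expressed in terms of
generalized elements. -/
def IsKernelImage {X V W : C} (N : Subobject X) (α : V ⟶ X) (β : V ⟶ W) : Prop :=
  ∀ ⦃T : C⦄ (x : T ⟶ X), N.Factors x ↔
    ∃ (T' : C) (e : T' ⟶ T) (_ : Epi e) (y : T' ⟶ V), y ≫ β = 0 ∧ e ≫ x = y ≫ α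

lemma isKernelImage_iff {X V W : C} (N : Subobject X) (α : V ⟶ X) (β : V ⟶ W) :
    IsKernelImage N α β ↔ imageSubobject (kernel.ι β ≫ α) = N := by
  have key : IsKernelImage (imageSubobject (kernel.ι β ≫ α)) α β := by
    intro T x
    rw [imageSubobject_factors_iff]
    constructor
    · rintro ⟨T', e, he, y, hy⟩
      exact ⟨T', e, he, y ≫ kernel.ι β, by simp, by simpa using hy⟩
    · rintro ⟨T', e, he, y, hy, h⟩
      exact ⟨T', e, he, kernel.lift β y hy, by simpa using h⟩
  constructor
  · intro h
    exact subobject_eq_of_factors_iff fun T x => (key x).trans (h x).symm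
  · rintro rfl
    exact key

lemma IsKernelImage.factors {X V W T : C} {N : Subobject X} {α : V ⟶ X} {β : V ⟶ W}
    (h : IsKernelImage N α β) {y : T ⟶ V} (hy : y ≫ β = 0) : N.Factors (y ≫ α) :=
  (h _).2 ⟨T, 𝟙 T, inferInstance, y, hy, by simp⟩

end Factoring

section Powers

omit [CategoryTheory.Linear ℚ A]

lemma powMap_comp {X Y Z : A} (f : X ⟶ Y) (g : Y ⟶ Z) (n : ℕ) :
    powMap f n ≫ powMap g n = powMap (f ≫ g) n := by
  ext
  simp

lemma powMap_id (X : A) (n : ℕ) : powMap (𝟙 X) n = 𝟙 (pow X n) := by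
  ext
  simp

lemma powMap_add {X Y : A} (f g : X ⟶ Y) (n : ℕ) :
    powMap (f + g) n = powMap f n + powMap g n := by
  apply biproduct.hom_ext
  intro j
  simp

lemma powMap_exact {X Y Z T : A} {f : X ⟶ Y} {g : Y ⟶ Z}
    (h : ∀ y : T ⟶ Y, y ≫ g = 0 → ∃ x : T ⟶ X, y = x ≫ f) {n : ℕ} (y : T ⟶ pow Y n)
    (hy : y ≫ powMap g n = 0) : ∃ x : T ⟶ pow X n, y = x ≫ powMap f n := by
  have hj : ∀ j : Fin n, ∃ x : T ⟶ X, y ≫ biproduct.π _ j = x ≫ f := fun j => h _ <| by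
    have := hy =≫ biproduct.π _ j
    simpa using this
  choose x hx using hj
  refine ⟨biproduct.lift x, ?_⟩
  apply biproduct.hom_ext
  intro j
  simp [hx]

lemma powMap_biprod_total (X Y : A) (n : ℕ) :
    powMap (biprod.fst : X ⊞ Y ⟶ X) n ≫ powMap biprod.inl n +
      powMap (biprod.snd : X ⊞ Y ⟶ Y) n ≫ powMap biprod.inr n = 𝟙 _ := by
  rw [powMap_comp, powMap_comp, ← powMap_add, biprod.total, powMap_id]

variable (X : A) (m l : ℕ)

/-- The inclusion of the first `m` summands into `X^(m+l)`. -/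
noncomputable def powInl : pow X m ⟶ pow X (m + l) :=
  biproduct.desc fun j => biproduct.ι (fun _ : Fin (m + l) => X) (Fin.castAdd l j)

/-- The inclusion of the last `l` summands into `X^(m+l)`. -/
noncomputable def powInr : pow X l ⟶ pow X (m + l) :=
  biproduct.desc fun j => biproduct.ι (fun _ : Fin (m + l) => X) (Fin.natAdd m j)

/-- The projection of `X^(m+l)` onto the first `m` summands. -/
noncomputable def powFst : pow X (m + l) ⟶ pow X m :=
  biproduct.lift fun j => biproduct.π (fun _ : Fin (m + l) => X) (Fin.castAdd l j)

/-- The projection of `X^(m+l)` onto the last `l` summands. -/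
noncomputable def powSnd : pow X (m + l) ⟶ pow X l :=
  biproduct.lift fun j => biproduct.π (fun _ : Fin (m + l) => X) (Fin.natAdd m j)

lemma powInl_powFst : powInl X m l ≫ powFst X m l = 𝟙 _ := by
  ext j k
  simp [powInl, powFst, biproduct.ι_π, Fin.ext_iff]

lemma powInr_powSnd : powInr X m l ≫ powSnd X m l = 𝟙 _ := by
  ext j k
  simp [powInr, powSnd, biproduct.ι_π, Fin.ext_iff]

lemma powInl_powSnd : powInl X m l ≫ powSnd X m l = 0 := by
  ext j k
  simp only [powInl, powSnd, Category.assoc, biproduct.lift_π, biproduct.ι_desc_assoc,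
    zero_comp, comp_zero]
  exact biproduct.ι_π_ne _ (by simp only [ne_eq, Fin.ext_iff, Fin.val_castAdd, Fin.val_natAdd]; omega)

lemma powInr_powFst : powInr X m l ≫ powFst X m l = 0 := by
  ext j k
  simp only [powInr, powFst, Category.assoc, biproduct.lift_π, biproduct.ι_desc_assoc,
    zero_comp, comp_zero]
  exact biproduct.ι_π_ne _ (by simp only [ne_eq, Fin.ext_iff, Fin.val_castAdd, Fin.val_natAdd]; omega)

lemma powInl_naturality {Y : A} (f : X ⟶ Y) :
    powInl X m l ≫ powMap f (m + l) = powMap f m ≫ powInl Y m l := by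
  apply biproduct.hom_ext'
  intro j
  simp [powInl]

/-- The biproduct of two powers of `X` is a retract of a power of `X`. -/
noncomputable def retractPowAdd : Retract (pow X m ⊞ pow X l) (pow X (m + l)) where
  i := biprod.desc (powInl X m l) (powInr X m l)
  r := biprod.lift (powFst X m l) (powSnd X m l)
  retract := by
    apply biprod.hom_ext' <;> apply biprod.hom_ext <;>
      simp [powInl_powFst, powInl_powSnd, powInr_powFst, powInr_powSnd]

/-- `V` is a direct summand of a power of `X`. -/
def IsSummandOfPow (X V : A) : Prop := ∃ n : ℕ, Nonempty (Retract V (pow X n))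

lemma isSummandOfPow_pow {X Y : A} (h : Retract Y X) (n : ℕ) : IsSummandOfPow X (pow Y n) :=
  ⟨n, ⟨⟨powMap h.i n, powMap h.r n, by rw [powMap_comp, h.retract, powMap_id]⟩⟩⟩

lemma IsSummandOfPow.biprod {X V W : A} (hV : IsSummandOfPow X V) (hW : IsSummandOfPow X W) :
    IsSummandOfPow X (V ⊞ W) := by
  obtain ⟨m, ⟨r⟩⟩ := hV
  obtain ⟨n, ⟨s⟩⟩ := hW
  let t : Retract (V ⊞ W) (pow X m ⊞ pow X n) :=
    ⟨biprod.map r.i s.i, biprod.map r.r s.r, by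
      apply biprod.hom_ext' <;> apply biprod.hom_ext <;> simp⟩
  exact ⟨m + n, ⟨t.trans (retractPowAdd X m n)⟩⟩

/-- The inclusion of the first summand exhibits it as a retract of the biproduct. -/
noncomputable def retractBiprodLeft (X Y : A) : Retract X (X ⊞ Y) :=
  ⟨biprod.inl, biprod.fst, by simp⟩

/-- The inclusion of the second summand exhibits it as a retract of the biproduct. -/
noncomputable def retractBiprodRight (X Y : A) : Retract Y (X ⊞ Y) :=
  ⟨biprod.inr, biprod.snd, by simp⟩

end Powers

section Principal

omit [CategoryTheory.Linear ℚ A]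

lemma isPrincipal_of_isKernelImage {X : A}
    (h : ∀ (m : ℕ) (N : Subobject (pow X m)), ∃ (V W : A) (α : V ⟶ pow X m) (β : V ⟶ W),
      IsSummandOfPow X V ∧ IsSummandOfPow X W ∧ IsKernelImage N α β) : IsPrincipal X := by
  intro m N
  obtain ⟨V, W, α, β, ⟨k, ⟨r⟩⟩, ⟨l, ⟨s⟩⟩, hN⟩ := h m N
  refine ⟨k, l, r.r ≫ α, r.r ≫ β ≫ s.i, ?_⟩
  rw [← isKernelImage_iff]
  intro T x
  rw [hN x]
  constructor
  · rintro ⟨T', e, he, y, hy, hx⟩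
    exact ⟨T', e, he, y ≫ r.i, by simp [reassoc_of% hy], by simpa using hx⟩
  · rintro ⟨T', e, he, y, hy, hx⟩
    refine ⟨T', e, he, y ≫ r.r, ?_, by simpa using hx⟩
    simpa using hy =≫ s.r

lemma IsPrincipal.exists_isKernelImage {X V : A} (hX : IsPrincipal X)
    (hV : IsSummandOfPow X V) (N : Subobject V) :
    ∃ (k l : ℕ) (α : pow X k ⟶ V) (β : pow X k ⟶ pow X l), IsKernelImage N α β := by
  obtain ⟨n, ⟨r⟩⟩ := hV
  obtain ⟨k, l, α, β, h⟩ := hX n ((Subobject.pullback r.r).obj N)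
  rw [← isKernelImage_iff] at h
  refine ⟨k, l, α ≫ r.r, β, fun T x => ?_⟩
  constructor
  · intro hx
    obtain ⟨T', e, he, y, hy, h'⟩ := (h (x ≫ r.i)).1
      ((pullback_factors_iff _ _ _).2 (by simpa using hx))
    exact ⟨T', e, he, y, hy, by simpa using h' =≫ r.r⟩
  · rintro ⟨T', e, he, y, hy, h'⟩
    apply factors_of_epi_comp e
    rw [h', ← Category.assoc]
    exact (pullback_factors_iff _ _ _).1 (h.factors hy)

end Principal

section Saturated

/-- If `ker φ` is the universal lift of a subobject of an object of `A_1`, then it has no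
nonzero morphism to an object of `A_0`. -/
lemma IsUnivLift.hom_eq_zero {A0 A1 : AbelianSubcat A} (horth : OrthogonalPair A0 A1)
    {X Y : A} {p : X ⟶ Y} {N1 : Subobject Y} {K : Subobject X} (hK : IsUnivLift p N1 K)
    (hY : A1.P Y) {Z : A} (hZ : A0.P Z) (f : (K : A) ⟶ Z) : f = 0 := by
  obtain ⟨hp, hmin⟩ := hK
  let N' : Subobject X := imageSubobject (kernel.ι f ≫ K.arrow)
  have hle : N' ≤ K := Subobject.le_of_factors <| by
    obtain ⟨T', e, he, y, hy⟩ := (imageSubobject_factors_iff _ _).1 (Subobject.factors_self N')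
    apply factors_of_epi_comp e
    rw [hy, ← Category.assoc]
    exact Subobject.factors_comp_arrow _
  have hker : ∀ {T : A} (y : T ⟶ (K : A)), y ≫ f = 0 → N'.Factors (y ≫ K.arrow) := by
    intro T y hy
    rw [← kernel.lift_ι f y hy, Category.assoc]
    exact imageSubobject_factors_comp_self _ _
  have hg : K.arrow ≫ p ≫ cokernel.π (subImg p N').arrow = 0 := by
    apply eq_zero_of_kernel_comp f
    · have : (subImg p N').Factors (kernel.ι f ≫ K.arrow ≫ p) :=
        (subImg_factors_iff _ _ _).2 ⟨_, 𝟙 _, inferInstance, kernel.ι f ≫ K.arrow,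
          hker _ (kernel.condition f), by simp⟩
      simpa using (factors_iff_comp_cokernel _ _).1 this
    · exact horth.1 (A0.mem_of_mono (Abelian.factorThruCoimage f) inferInstance hZ)
        (A1.mem_of_epi (cokernel.π (subImg p N').arrow) inferInstance hY)
  have hK' : subImg p N' = N1 := by
    rw [← hp]
    apply subobject_eq_of_factors_iff
    intro T x
    rw [subImg_factors_iff, subImg_factors_iff]
    constructor
    · rintro ⟨T', e, he, y, hy, h⟩
      exact ⟨T', e, he, y, Subobject.factors_of_le _ hle hy, h⟩
    · rintro ⟨T', e, he, y, hy, h⟩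
      rw [← subImg_factors_iff]
      apply factors_of_epi_comp e
      rw [h, ← Subobject.factorThru_arrow _ y hy, factors_iff_comp_cokernel, Category.assoc,
        Category.assoc, hg, comp_zero]
  obtain ⟨T', e, he, y, hy⟩ := (imageSubobject_factors_iff _ _).1
    (Subobject.factors_of_le _ (hmin N' hK') (Subobject.factors_self K))
  have hey : e = y ≫ kernel.ι f := (cancel_mono K.arrow).1 (by simpa using hy)
  rw [← cancel_epi e, hey]
  simp

/-- If `U ⊆ X` is the universal extension of a subobject of an object of `A_0`, then `X/U`
receives no nonzero morphism from an object of `A_1`. -/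
lemma IsUnivExt.hom_eq_zero {A0 A1 : AbelianSubcat A} (horth : OrthogonalPair A0 A1)
    {X : A} {S N0 U : Subobject X} (hU : IsUnivExt S N0 U) (hS : A0.P (S : A))
    {Z : A} (hZ : A1.P Z) (f : Z ⟶ cokernel U.arrow) : f = 0 := by
  obtain ⟨hinf, hmax⟩ := hU
  let L : Subobject X := (Subobject.pullback (cokernel.π U.arrow)).obj (imageSubobject f)
  have hL : ∀ {T : A} (x : T ⟶ X),
      L.Factors x ↔ (imageSubobject f).Factors (x ≫ cokernel.π U.arrow) :=
    fun x => pullback_factors_iff _ _ _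
  have hUL : U ≤ L := Subobject.le_of_factors <| (hL _).2 <| by
    rw [cokernel.condition]
    exact Subobject.factors_zero
  have hLS : L ⊓ S ≤ U := by
    apply Subobject.le_of_factors
    rw [factors_iff_comp_cokernel]
    refine eq_zero_of_factors f ((hL _).1 (Subobject.inf_arrow_factors_left _ _)) ?_
    exact horth.1 (A0.mem_of_mono (Subobject.ofLE (L ⊓ S) S inf_le_right) inferInstance hS)
      (A1.mem_of_epi (factorThruImageSubobject f) inferInstance hZ)
  have hLN : L ⊓ S = N0 := by
    rw [← hinf]
    exact le_antisymm (le_inf hLS inf_le_right) (inf_le_inf_right _ hUL)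
  have hLU := hmax L hLN
  obtain ⟨T', e, he, y, hy⟩ := surjective_up_to_refinements_of_epi (cokernel.π U.arrow) f
  rw [← cancel_epi e, comp_zero, hy, ← factors_iff_comp_cokernel]
  apply Subobject.factors_of_le _ hLU
  rw [hL, ← hy]
  exact imageSubobject_factors_comp_self _ _

variable {A0 A1 : AbelianSubcat A} {M0 M M1 : A} {i : M0 ⟶ M} {p : M ⟶ M1}

lemma AdmissibleSeq.exists_lift (hadm : AdmissibleSeq A0 A1 M0 M M1 i p) {T : A} (y : T ⟶ M)
    (hy : y ≫ p = 0) : ∃ x : T ⟶ M0, y = x ≫ i := by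
  have := hadm.shortExact.mono_f
  exact ⟨hadm.shortExact.exact.lift y hy, (hadm.shortExact.exact.lift_f y hy).symm⟩

/-- If the sequence is right saturated, a subobject `N` is the sum of the image of a universal
lift of its projection to a power of `M_1`, and of its intersection with a power of `M_0`. -/
lemma isPrincipal_biprod_of_rightSaturated (horth : OrthogonalPair A0 A1)
    (hadm : AdmissibleSeq A0 A1 M0 M M1 i p) (hM0 : IsPrincipal M0) (hM1 : IsPrincipal M1)
    (hsat : RightSaturated i p) : IsPrincipal (M ⊞ M0) := by
  refine isPrincipal_of_isKernelImage fun m N => ?_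
  let π : pow (M ⊞ M0) m ⟶ pow M1 m := powMap biprod.fst m ≫ powMap p m
  let s : pow M m ⟶ pow (M ⊞ M0) m := powMap biprod.inl m
  let γ : pow M0 m ⊞ pow M0 m ⟶ pow (M ⊞ M0) m :=
    biprod.desc (powMap i m ≫ powMap biprod.inl m) (powMap biprod.inr m)
  have hsπ : s ≫ π = powMap p m := by
    simp only [s, π, powMap_comp, biprod.inl_fst_assoc]
  have hγ : ∀ {T : A} (x : T ⟶ pow (M ⊞ M0) m), x ≫ π = 0 → ∃ z, x = z ≫ γ := by
    intro T x hx
    obtain ⟨y, hy⟩ := powMap_exact (fun y hy => hadm.exists_lift y hy)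
      (x ≫ powMap biprod.fst m) (by simpa only [π, Category.assoc] using hx)
    refine ⟨biprod.lift y (x ≫ powMap biprod.snd m), ?_⟩
    have := x ≫= powMap_biprod_total M M0 m
    rw [Category.comp_id, Preadditive.comp_add, reassoc_of% hy] at this
    rw [biprod.lift_desc, Category.assoc]
    exact this.symm
  obtain ⟨k, l, a, b, hab⟩ := hM1.exists_isKernelImage
    (isSummandOfPow_pow (Retract.refl M1) m) (subImg π N)
  obtain ⟨k0, l0, a0, b0, hab0⟩ := hM0.exists_isKernelImage
    ((isSummandOfPow_pow (Retract.refl M0) m).biprod (isSummandOfPow_pow (Retract.refl M0) m))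
    ((Subobject.pullback γ).obj N)
  obtain ⟨α, hα, -⟩ := hsat k m a
  obtain ⟨φ, hφ, hu⟩ := hsat k l b
  have hpull : ∀ {T : A} (z : T ⟶ _), ((Subobject.pullback γ).obj N).Factors z ↔
      N.Factors (z ≫ γ) := fun z => pullback_factors_iff _ _ _
  have hN : ∀ {T : A} (t : T ⟶ pow M k), t ≫ φ = 0 → N.Factors (t ≫ α ≫ s) := by
    have h0 : (kernelSubobject φ).arrow ≫ α ≫ s ≫ cokernel.π N.arrow = 0 := by
      apply eq_zero_of_factors (γ ≫ cokernel.π N.arrow)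
      · have hmem : (subImg π N).Factors ((kernelSubobject φ).arrow ≫ α ≫ s ≫ π) := by
          rw [hsπ, hα, ← Category.assoc]
          apply hab.factors
          rw [Category.assoc, ← hφ, kernelSubobject_arrow_comp_assoc, zero_comp]
        obtain ⟨T', e, he, y, hy, h⟩ := (subImg_factors_iff _ _ _).1 hmem
        obtain ⟨z, hz⟩ := hγ (e ≫ (kernelSubobject φ).arrow ≫ α ≫ s - y) (by simp [h])
        refine (imageSubobject_factors_iff _ _).2 ⟨T', e, he, z, ?_⟩
        rw [← reassoc_of% hz, Preadditive.sub_comp, (factors_iff_comp_cokernel _ _).1 hy]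
        simp
      · exact hu.hom_eq_zero horth (A1.pow_mem hadm.mem1 k)
          (A0.mem_of_epi (factorThruImageSubobject (γ ≫ cokernel.π N.arrow)) inferInstance
            (A0.mem_biprod (A0.pow_mem hadm.mem0 m) (A0.pow_mem hadm.mem0 m)))
    intro T t ht
    rw [factors_iff_comp_cokernel,
      ← Subobject.factorThru_arrow _ t ((kernelSubobject_factors_iff φ t).2 ht),
      Category.assoc, Category.assoc, Category.assoc, h0, comp_zero]
  refine ⟨pow M k ⊞ pow M0 k0, pow M l ⊞ pow M0 l0, biprod.desc (α ≫ s) (a0 ≫ γ),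
    biprod.map φ b0, (isSummandOfPow_pow (retractBiprodLeft M M0) k).biprod
      (isSummandOfPow_pow (retractBiprodRight M M0) k0),
    (isSummandOfPow_pow (retractBiprodLeft M M0) l).biprod
      (isSummandOfPow_pow (retractBiprodRight M M0) l0), fun T x => ⟨fun hx => ?_, ?_⟩⟩
  · obtain ⟨T₁, e₁, he₁, y, hy, hxy⟩ := (hab (x ≫ π)).1
      ((subImg_factors_iff _ _ _).2 ⟨T, 𝟙 T, inferInstance, x, hx, by simp⟩)
    obtain ⟨T₂, e₂, he₂, w, hw, hyw⟩ := (subImg_factors_iff _ _ y).1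
      (by rw [hu.1, kernelSubobject_factors_iff]; exact hy)
    rw [kernelSubobject_factors_iff] at hw
    obtain ⟨z, hz⟩ := hγ (e₂ ≫ e₁ ≫ x - w ≫ α ≫ s) (by
      simp [hsπ, hα, hxy, reassoc_of% hyw])
    obtain ⟨T₃, e₃, he₃, v, hv, hzv⟩ := (hab0 z).1 ((hpull z).2 (by
      rw [← hz]
      exact factors_sub (Subobject.factors_of_factors_right _
        (Subobject.factors_of_factors_right _ hx)) (hN w hw)))
    refine ⟨T₃, e₃ ≫ e₂ ≫ e₁, inferInstance, biprod.lift (e₃ ≫ w) v, ?_, ?_⟩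
    · apply biprod.hom_ext <;> simp [hw, hv]
    · rw [biprod.lift_desc, ← reassoc_of% hzv, ← hz]
      simp
  · rintro ⟨T', e, he, y, hy, hx⟩
    apply factors_of_epi_comp e
    have h1 : (y ≫ biprod.fst) ≫ φ = 0 := by simpa using hy =≫ biprod.fst
    have h2 : (y ≫ biprod.snd) ≫ b0 = 0 := by simpa using hy =≫ biprod.snd
    have h3 := (hpull _).1 (hab0.factors h2)
    have h4 := Subobject.factors_add _ _ (hN _ h1) h3
    rw [hx, biprod.desc_eq, Preadditive.comp_add]
    simpa only [Category.assoc] using h4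

/-- If the sequence is left saturated, a subobject `N` is determined by its image in a power of
`M_1` and by the condition of being mapped to the image of a universal extension. -/
lemma isPrincipal_biprod_of_leftSaturated (horth : OrthogonalPair A0 A1)
    (hadm : AdmissibleSeq A0 A1 M0 M M1 i p) (hM0 : IsPrincipal M0) (hM1 : IsPrincipal M1)
    (hsat : LeftSaturated i p) : IsPrincipal (M ⊞ M1) := by
  refine isPrincipal_of_isKernelImage fun m N => ?_
  let ι : pow M0 m ⟶ pow (M ⊞ M1) m := powMap i m ≫ powMap biprod.inl m
  let r : pow (M ⊞ M1) m ⟶ pow M m := powMap biprod.fst m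
  let q : pow (M ⊞ M1) m ⟶ pow M1 m ⊞ pow M1 m :=
    biprod.lift (powMap biprod.fst m ≫ powMap p m) (powMap biprod.snd m)
  have hιr : ι ≫ r = powMap i m := by
    simp only [ι, r, powMap_comp, Category.assoc, biprod.inl_fst, Category.comp_id]
  have hι : ∀ {T : A} (x : T ⟶ pow (M ⊞ M1) m), x ≫ q = 0 → ∃ z, x = z ≫ ι := by
    intro T x hx
    have h1 : x ≫ powMap biprod.fst m ≫ powMap p m = 0 := by simpa [q] using hx =≫ biprod.fst
    have h2 : x ≫ powMap biprod.snd m = 0 := by simpa [q] using hx =≫ biprod.snd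
    obtain ⟨y, hy⟩ := powMap_exact (fun y hy => hadm.exists_lift y hy)
      (x ≫ powMap biprod.fst m) (by simpa only [Category.assoc] using h1)
    refine ⟨y, ?_⟩
    have := x ≫= powMap_biprod_total M M1 m
    rw [Category.comp_id, Preadditive.comp_add, reassoc_of% hy, reassoc_of% h2, zero_comp,
      add_zero] at this
    exact this.symm
  obtain ⟨k, l, a, b, hab⟩ := hM0.exists_isKernelImage
    (isSummandOfPow_pow (Retract.refl M0) m) ((Subobject.pullback ι).obj N)
  have hsumR := fun X (h : Retract M1 X) =>
    (isSummandOfPow_pow h m).biprod (isSummandOfPow_pow h m)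
  obtain ⟨k1, l1, a1, b1, hab1⟩ := hM1.exists_isKernelImage (hsumR M1 (Retract.refl M1))
    (subImg q N)
  obtain ⟨φ, hφ, hu⟩ := hsat k (m + l) (a ≫ powInl M0 m l + b ≫ powInr M0 m l)
  have hpull : ∀ {T : A} (z : T ⟶ _), ((Subobject.pullback ι).obj N).Factors z ↔
      N.Factors (z ≫ ι) := fun z => pullback_factors_iff _ _ _
  let j := powInl M m l
  have hj : powInl M0 m l ≫ powMap i (m + l) = powMap i m ≫ j := powInl_naturality _ _ _ _
  have hmonoi : Mono i := hadm.shortExact.mono_f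
  have hmono : Mono (powMap i (m + l)) := by
    dsimp only [powMap]
    infer_instance
  have hN : ∀ {T : A} (x : T ⟶ _), N.Factors x → (imageSubobject φ).Factors (x ≫ r ≫ j) := by
    have h0 : N.arrow ≫ r ≫ j ≫ cokernel.π (imageSubobject φ).arrow = 0 := by
      apply eq_zero_of_kernel_comp (N.arrow ≫ q)
      · obtain ⟨y, hy⟩ := hι (kernel.ι (N.arrow ≫ q) ≫ N.arrow) (by simp)
        obtain ⟨T', e, he, z, hz, hyz⟩ := (hab y).1 ((hpull y).2 (by
          rw [← hy]; exact Subobject.factors_comp_arrow _))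
        have : (imageSubobject φ).Factors (kernel.ι (N.arrow ≫ q) ≫ N.arrow ≫ r ≫ j) := by
          refine (imageSubobject_factors_iff _ _).2 ⟨T', e, he, z ≫ powMap i k, ?_⟩
          rw [reassoc_of% hy, reassoc_of% hιr, Category.assoc, hφ, Preadditive.add_comp,
            Preadditive.comp_add, Category.assoc, Category.assoc, hj, reassoc_of% hz,
            reassoc_of% hyz]
          simp
        simpa using (factors_iff_comp_cokernel _ _).1 this
      · intro g'
        refine hu.hom_eq_zero horth
          (A0.mem_of_epi (factorThruImageSubobject _) inferInstance (A0.pow_mem hadm.mem0 _))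
          (A1.mem_of_mono (Abelian.factorThruCoimage (N.arrow ≫ q)) inferInstance
            (A1.mem_biprod (A1.pow_mem hadm.mem1 m) (A1.pow_mem hadm.mem1 m))) g'
    intro T x hx
    rw [factors_iff_comp_cokernel, ← Subobject.factorThru_arrow _ x hx, Category.assoc,
      Category.assoc, Category.assoc, h0, comp_zero]
  have hN' : ∀ {T : A} (w : T ⟶ pow M0 m), (imageSubobject φ).Factors (w ≫ powMap i m ≫ j) →
      N.Factors (w ≫ ι) := by
    intro T w hw
    have h1 : (imageSubobject (powMap i (m + l))).Factors (w ≫ powMap i m ≫ j) := by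
      rw [← hj, ← Category.assoc]
      exact imageSubobject_factors_comp_self _ _
    have h2 := (Subobject.inf_factors _).2 ⟨hw, h1⟩
    rw [hu.1, imageSubobject_factors_iff] at h2
    obtain ⟨T', e, he, v, hv⟩ := h2
    rw [← hj] at hv
    have h3 : e ≫ w ≫ powInl M0 m l = v ≫ (a ≫ powInl M0 m l + b ≫ powInr M0 m l) := by
      rw [← cancel_mono (powMap i (m + l))]
      simpa only [Category.assoc] using hv
    rw [← hpull]
    refine (hab w).2 ⟨T', e, he, v, ?_, ?_⟩
    · simpa [powInl_powSnd, powInr_powSnd] using (h3 =≫ powSnd M0 m l).symm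
    · simpa [powInl_powFst, powInr_powFst] using h3 =≫ powFst M0 m l
  refine ⟨pow (M ⊞ M1) m ⊞ (pow M k ⊞ pow M1 k1),
    pow M (m + l) ⊞ ((pow M1 m ⊞ pow M1 m) ⊞ pow M1 l1), biprod.fst,
    biprod.lift (biprod.fst ≫ r ≫ j - biprod.snd ≫ biprod.fst ≫ φ)
      (biprod.lift (biprod.fst ≫ q - biprod.snd ≫ biprod.snd ≫ a1)
        (biprod.snd ≫ biprod.snd ≫ b1)),
    (isSummandOfPow_pow (Retract.refl _) m).biprod
      ((isSummandOfPow_pow (retractBiprodLeft M M1) k).biprod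
        (isSummandOfPow_pow (retractBiprodRight M M1) k1)),
    (isSummandOfPow_pow (retractBiprodLeft M M1) _).biprod
      ((hsumR _ (retractBiprodRight M M1)).biprod
        (isSummandOfPow_pow (retractBiprodRight M M1) l1)), fun T x => ⟨fun hx => ?_, ?_⟩⟩
  · obtain ⟨T₁, e₁, he₁, y, hy⟩ := (imageSubobject_factors_iff _ _).1 (hN x hx)
    obtain ⟨T₂, e₂, he₂, z, hz, hxz⟩ := (hab1 (e₁ ≫ x ≫ q)).1
      ((subImg_factors_iff _ _ _).2 ⟨T₁, 𝟙 T₁, inferInstance, e₁ ≫ x,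
        Subobject.factors_of_factors_right _ hx, by simp⟩)
    refine ⟨T₂, e₂ ≫ e₁, inferInstance,
      biprod.lift (e₂ ≫ e₁ ≫ x) (biprod.lift (e₂ ≫ y) z), ?_, by simp⟩
    apply biprod.hom_ext
    · simp [hy]
    · apply biprod.hom_ext
      · simp only [Category.assoc, biprod.lift_fst, biprod.lift_snd, Preadditive.comp_sub,
          biprod.lift_fst_assoc, biprod.lift_snd_assoc, hxz, sub_self, zero_comp]
      · simp [hz]
  · rintro ⟨T', e, he, y, hy, hx⟩
    apply factors_of_epi_comp e
    rw [hx]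
    have h1 : y ≫ biprod.fst ≫ r ≫ j = (y ≫ biprod.snd ≫ biprod.fst) ≫ φ := by
      simpa [sub_eq_zero] using hy =≫ biprod.fst
    have h2 : y ≫ biprod.fst ≫ q = (y ≫ biprod.snd ≫ biprod.snd) ≫ a1 := by
      have := (hy =≫ biprod.snd) =≫ biprod.fst
      simp only [Category.assoc, biprod.lift_fst, biprod.lift_snd, Preadditive.comp_sub,
        zero_comp, sub_eq_zero] at this
      simpa only [Category.assoc] using this
    have h3 : (y ≫ biprod.snd ≫ biprod.snd) ≫ b1 = 0 := by
      simpa using (hy =≫ biprod.snd) =≫ biprod.snd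
    have h4 := hab1.factors h3
    rw [← h2] at h4
    obtain ⟨T₁, e₁, he₁, n, hn, hyn⟩ := (subImg_factors_iff _ _ _).1 h4
    obtain ⟨w, hw⟩ := hι (e₁ ≫ y ≫ biprod.fst - n) (by
      rw [Preadditive.sub_comp, ← hyn, Category.assoc, Category.assoc, sub_self])
    have h5 : (imageSubobject φ).Factors (w ≫ powMap i m ≫ j) := by
      rw [← hιr, Category.assoc, ← reassoc_of% hw, Preadditive.sub_comp, Category.assoc,
        Category.assoc, h1]
      refine factors_sub ?_ (hN n hn)
      rw [← Category.assoc]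
      exact imageSubobject_factors_comp_self _ _
    have h6 := hN' w h5
    rw [← hw] at h6
    apply factors_of_epi_comp e₁
    simpa using Subobject.factors_add _ _ h6 hn

end Saturated

/-- **Proposition (`PROPSATURATEDPRINCIPAL`).** Let `0 → M_0 → M → M_1 → 0` be an
admissible exact sequence with `M_0 ∈ A_0` and `M_1 ∈ A_1` both principal.
1. If the sequence is right saturated and `Hom(M, A_0) = 0`, then `M ⊕ M_0` is principal.
2. If the sequence is left saturated and `Hom(A_1, M) = 0`, then `M ⊕ M_1` is
principal. -/
theorem principal_of_saturated (A0 A1 : AbelianSubcat A) (horth : OrthogonalPair A0 A1)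
    (M0 M M1 : A) (i : M0 ⟶ M) (p : M ⟶ M1) (hadm : AdmissibleSeq A0 A1 M0 M M1 i p)
    (hM0 : IsPrincipal M0) (hM1 : IsPrincipal M1) :
    (RightSaturated i p → (∀ X : A, A0.P X → ∀ f : M ⟶ X, f = 0) →
      IsPrincipal (M ⊞ M0)) ∧
    (LeftSaturated i p → (∀ X : A, A1.P X → ∀ f : X ⟶ M, f = 0) →
      IsPrincipal (M ⊞ M1)) := by
  exact ⟨fun hsat _ => isPrincipal_biprod_of_rightSaturated horth hadm hM0 hM1 hsat,
    fun hsat _ => isPrincipal_biprod_of_leftSaturated horth hadm hM0 hM1 hsat⟩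
end
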